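/- Let F be a finite field, D a finite set, V ⊆ F^D an F-linear subspace, and v a uniformly random element of V. For subsets S, S' ⊆ D, the restrictions v|_S and v|_{S'} are statistically dependent if and only if there exist coefficients (c_i)_{i∈S} and (d_i)_{i∈S'} such that (1) some w ∈ V has ∑_{i∈S} c_i w_i ≠ 0, and (2) every w ∈ V satisfies ∑_{i∈S} c_i w_i = ∑_{i∈S'} d_i w_i. -/

import Mathlib

/-!
Let `K S ≤ V` be the subspace of vectors vanishing on `S` (`vanishingOn V S` below). Both sides of the equivalence say that
`K S ⊔ K S'` is a proper subspace of `V`.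

If `K S ⊔ K S' = V`, the events `v|_S = x` and `v|_{S'} = x'` (when nonempty) are cosets of `K S` and
`K S'` whose intersection is a coset of `K S ⊓ K S'`, so independence is the count
`|K S ⊓ K S'| * |V| = |K S| * |K S'|`, which follows from the dimension formula. If the sum is proper,
some nonzero functional on `V` kills both `K S` and `K S'`; a functional killing `K S` is a linear
combination of the coordinates in `S`, which gives `c` and `d`. Conversely, given `c`, `d` and a
witness `w`, independence produces `u ∈ V` agreeing with `w` on `S` and vanishing on `S'`, and then
`∑ c w = ∑ c u = ∑ d u = 0`.
-/

/-- The vectors of `V` that vanish on `S`, as a submodule of `V`. -/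
def vanishingOn {F D : Type*} [Field F] (V : Submodule F (D → F)) (S : Finset D) :
    Submodule F V :=
  ⨅ i : S, LinearMap.ker ((LinearMap.proj (i : D) : (D → F) →ₗ[F] F) ∘ₗ V.subtype)

lemma mem_vanishingOn {F D : Type*} [Field F] {V : Submodule F (D → F)} {S : Finset D} {w : V} :
    w ∈ vanishingOn V S ↔ ∀ i ∈ S, (w : D → F) i = 0 := by
  simp [vanishingOn]

lemma exists_coeff_of_vanishingOn_le_ker {F D : Type*} [Field F] {V : Submodule F (D → F)}
    {S : Finset D} {φ : V →ₗ[F] F} (h : vanishingOn V S ≤ LinearMap.ker φ) :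
    ∃ c : D → F, ∀ w : V, φ w = ∑ i ∈ S, c i * (w : D → F) i := by
  classical
  obtain ⟨c, hc⟩ := (Submodule.mem_span_range_iff_exists_fun F).1
    (mem_span_of_iInf_ker_le_ker h)
  refine ⟨fun i => if hi : i ∈ S then c ⟨i, hi⟩ else 0, fun w => ?_⟩
  rw [← hc, ← Finset.sum_coe_sort S, LinearMap.sum_apply]
  exact Finset.sum_congr rfl fun i _ => by simp [i.2]

lemma card_subtype_sub_mem {M R : Type*} [Ring R] [AddCommGroup M] [Module R M]
    (K : Submodule R M) (a : M) : Nat.card {w : M // w - a ∈ K} = Nat.card K :=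
  Nat.card_congr ((Equiv.subRight a).subtypeEquiv fun _ => Iff.rfl)

lemma card_inf_mul_card_of_sup_eq_top {F M : Type*} [Field F] [Finite F] [AddCommGroup M]
    [Module F M] [Module.Finite F M] {K L : Submodule F M} (h : K ⊔ L = ⊤) :
    Nat.card (K ⊓ L : Submodule F M) * Nat.card M = Nat.card K * Nat.card L := by
  have key := Submodule.finrank_sup_add_finrank_inf_eq K L
  rw [h, finrank_top] at key
  rw [Module.natCard_eq_pow_finrank (K := F) (V := K), Module.natCard_eq_pow_finrank (K := F) (V := L),
    Module.natCard_eq_pow_finrank (K := F) (V := M),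
    Module.natCard_eq_pow_finrank (K := F) (V := (K ⊓ L : Submodule F M)),
    ← pow_add, ← pow_add, ← key, add_comm]

/-- A fibre of the restriction to `S` is a coset of `vanishingOn V S`. -/
lemma sub_mem_vanishingOn {F D : Type*} [Field F] {V : Submodule F (D → F)} {S : Finset D}
    {a : V} {x : D → F} (ha : ∀ i ∈ S, (a : D → F) i = x i) (w : V) :
    w - a ∈ vanishingOn V S ↔ ∀ i ∈ S, (w : D → F) i = x i := by
  rw [mem_vanishingOn]
  refine forall₂_congr fun i hi => ?_
  rw [← ha i hi]
  exact sub_eq_zero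

/-- "Linear independence equals statistical independence": for `v` uniform in a
linear subspace `V ⊆ F^D`, the restrictions `v|_S` and `v|_{S'}` are
statistically dependent iff there is a linear functional supported on `S`,
non-vanishing on `V`, that agrees on `V` with a functional supported on `S'`. -/
theorem uniform_subspace_restrictions_dependent_iff
    {F D : Type*} [Field F] [Fintype F] [Fintype D]
    (V : Submodule F (D → F)) (S S' : Finset D) :
    (¬ ∀ (x x' : D → F),
        Nat.card {w : V // (∀ i ∈ S, (w : D → F) i = x i) ∧ (∀ i ∈ S', (w : D → F) i = x' i)}
            * Nat.card V
          = Nat.card {w : V // ∀ i ∈ S, (w : D → F) i = x i}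
            * Nat.card {w : V // ∀ i ∈ S', (w : D → F) i = x' i})
    ↔ ∃ (c d : D → F),
        (∃ w ∈ V, ∑ i ∈ S, c i * w i ≠ 0) ∧
        (∀ w ∈ V, ∑ i ∈ S, c i * w i = ∑ i ∈ S', d i * w i) := by
  have hfin : Finite V := Subtype.finite
  rw [not_iff_comm]
  constructor
  · intro h x x'
    have htop : vanishingOn V S ⊔ vanishingOn V S' = ⊤ := by
      by_contra hne
      obtain ⟨φ, hφ, hle⟩ := Submodule.exists_le_ker_of_lt_top _ (lt_top_iff_ne_top.2 hne)
      obtain ⟨c, hc⟩ := exists_coeff_of_vanishingOn_le_ker (le_sup_left.trans hle)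
      obtain ⟨d, hd⟩ := exists_coeff_of_vanishingOn_le_ker (le_sup_right.trans hle)
      obtain ⟨w, hw⟩ := DFunLike.ne_iff.1 hφ
      refine h ⟨c, d, ⟨w, w.2, ?_⟩, fun u hu => ?_⟩
      · rw [← hc w]
        exact hw
      · exact (hc ⟨u, hu⟩).symm.trans (hd ⟨u, hu⟩)
    by_cases hx : ∃ a : V, ∀ i ∈ S, (a : D → F) i = x i
    · by_cases hx' : ∃ b : V, ∀ i ∈ S', (b : D → F) i = x' i
      · obtain ⟨a, ha⟩ := hx
        obtain ⟨b, hb⟩ := hx'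
        -- Splitting `a - b = k + l` makes `a - k = b + l` a common point of the two cosets.
        obtain ⟨k, hk, l, hl, hkl⟩ := Submodule.mem_sup.1 (htop ▸ Submodule.mem_top : a - b ∈ _)
        have h1 : ∀ i ∈ S, ((a - k : V) : D → F) i = x i :=
          (sub_mem_vanishingOn ha _).1 (by simpa using hk)
        have h2 : ∀ i ∈ S', ((a - k : V) : D → F) i = x' i :=
          (sub_mem_vanishingOn hb _).1 (by
            rwa [show a - k - b = l by rw [sub_right_comm, ← hkl, add_sub_cancel_left]])
        simp only [← sub_mem_vanishingOn h1, ← sub_mem_vanishingOn h2, ← Submodule.mem_inf,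
          card_subtype_sub_mem]
        exact card_inf_mul_card_of_sup_eq_top htop
      · have e1 : IsEmpty {w : V // ∀ i ∈ S', (w : D → F) i = x' i} := ⟨fun w => hx' ⟨w, w.2⟩⟩
        have e2 : IsEmpty {w : V // (∀ i ∈ S, (w : D → F) i = x i) ∧
            (∀ i ∈ S', (w : D → F) i = x' i)} := ⟨fun w => hx' ⟨w, w.2.2⟩⟩
        simp only [Nat.card_of_isEmpty, zero_mul, mul_zero]
    · have e1 : IsEmpty {w : V // ∀ i ∈ S, (w : D → F) i = x i} := ⟨fun w => hx ⟨w, w.2⟩⟩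
      have e2 : IsEmpty {w : V // (∀ i ∈ S, (w : D → F) i = x i) ∧
          (∀ i ∈ S', (w : D → F) i = x' i)} := ⟨fun w => hx ⟨w, w.2.1⟩⟩
      simp only [Nat.card_of_isEmpty, zero_mul]
  · rintro h ⟨c, d, ⟨w, hw, hne⟩, hcd⟩
    have n1 : Nonempty {u : V // ∀ i ∈ S, (u : D → F) i = w i} := ⟨⟨⟨w, hw⟩, fun _ _ => rfl⟩⟩
    have n2 : Nonempty {u : V // ∀ i ∈ S', (u : D → F) i = (0 : D → F) i} :=
      ⟨⟨0, fun _ _ => rfl⟩⟩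
    have hpos := Nat.mul_pos (Nat.card_pos (α := {u : V // ∀ i ∈ S, (u : D → F) i = w i}))
      (Nat.card_pos (α := {u : V // ∀ i ∈ S', (u : D → F) i = (0 : D → F) i}))
    rw [← h w 0] at hpos
    obtain ⟨⟨u, hu, hu'⟩⟩ := (Nat.card_pos_iff.1 (Nat.pos_of_mul_pos_right hpos)).1
    apply hne
    rw [← Finset.sum_congr rfl fun i hi => congrArg (c i * ·) (hu i hi), hcd u u.2]
    exact Finset.sum_eq_zero fun i hi => by simp [hu' i hi]
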